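/- For $\beta\in\mathbb R$ let $w_{\beta,\beta}(x)=(1-x^2)^\beta$, $\varphi(x)=\sqrt{1-x^2}$. For $k\in\mathbb N=\{1,2,\dots\}$ let $\Delta_h^k(f,x)=\sum_{i=0}^k\binom ki(-1)^{k-i}f(x-kh/2+ih)$ if $x\pm kh/2\in[-1,1]$ and $\Delta_h^k(f,x)=0$ otherwise, and let $$\Omega_\varphi^k(f,\delta)=\sup_{0<h\le\delta}\|w_{\beta,\beta}\,\Delta^k_{h\varphi(\cdot)}(f,\cdot)\|_{L^1[-1+2k^2h^2,\,1-2k^2h^2]},$$ $$\overrightarrow\Omega{}_\varphi^k(f,\delta)=\sup_{0<h\le2k^2\delta^2}\|w_{\beta,\beta}\,\Delta^k_h(f,\cdot+kh/2)\|_{L^1[-1,-1+2k^2\delta^2]},$$ $$\overleftarrow\Omega{}_\varphi^k(f,\delta)=\sup_{0<h\le2k^2\delta^2}\|w_{\beta,\beta}\,\Delta^k_h(f,\cdot-kh/2)\|_{L^1[1-2k^2\delta^2,1]},$$ and $\omega_\varphi^k(f,\delta)_{w_{\beta,\beta},1}=\Omega_\varphi^k(f,\delta)+\overrightarrow\Omega{}_\varphi^k(f,\delta)+\overleftarrow\Omega{}_\varphi^k(f,\delta)$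 (the weighted Ditzian–Totik modulus). Let $\mathcal M_+^k$ be the set of functions $f$ that are $k$-monotone on $(-1,1)$ (all divided differences $[x_0,\dots,x_k;f]$ over $k+1$ distinct points of $(-1,1)$ are nonnegative) and vanish on $(-1,0]$, and let $W_1^{\beta,\beta}$ be the set of measurable $f:[-1,1]\to\mathbb R$ with $\|w_{\beta,\beta}f\|_{L^1[-1,1]}<\infty$. Theorem. Let $k\in\mathbb N$ and $\beta\in\mathbb R$. There is a constant $c>0$, depending only on $k$ and $\beta$, such that for every $f\in\mathcal M_+^k\cap W_1^{\beta,\beta}$ and every $0<\delta\le 1/(2k)$, with $$R:=c\,\|w_{\beta,\beta}f\|_{L^1[1-3k^2\delta^2,1]}+c\sup_{0<h\le\delta}h^k\,\|(1-y^2)^{-k/2}w_{\beta,\beta}(y)f(y)\|_{L^1[0,1-2k^2h^2]},$$ the following hold. (i) $\Omega_\varphi^k(f,\delta)+\overleftarrow\Omega{}_\varphi^k(f,\delta)\le R$. (ii) If $k\le2$, or $\beta\le0$, or $2k^2(k+1)\delta^2\le 3/2$, then $\omega_\varphi^k(f,\delta)_{w_{\beta,\beta},1}\le R$. -/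

import Mathlib

open MeasureTheory Set Filter
open scoped ENNReal

noncomputable section

/-- The Jacobi weight `w_{α,β}(x) = (1+x)^α (1-x)^β`. -/
def jacobi (α β : ℝ) (x : ℝ) : ℝ := (1 + x) ^ α * (1 - x) ^ β

/-- `φ(x) = √(1-x²)`. -/
def phiW (x : ℝ) : ℝ := Real.sqrt (1 - x ^ 2)

/-- The `L^p` norm of `g` on the interval `[a,b]` (essential sup when `p = ∞`). -/
def LpOn (g : ℝ → ℝ) (p : ℝ≥0∞) (a b : ℝ) : ℝ≥0∞ :=
  eLpNorm g p (volume.restrict (Icc a b))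

/-- The `k`-th symmetric difference `Δ_h^k(f,x)` relative to `[-1,1]`. -/
def symmDelta (k : ℕ) (h : ℝ) (f : ℝ → ℝ) (x : ℝ) : ℝ :=
  if (x - k * h / 2 ∈ Icc (-1 : ℝ) 1 ∧ x + k * h / 2 ∈ Icc (-1 : ℝ) 1) then
    ∑ i ∈ Finset.range (k + 1), ((k.choose i : ℝ) * (-1 : ℝ) ^ (k - i) * f (x - k * h / 2 + i * h))
  else 0

/-- Main-part weighted modulus `Ω_φ^k(f,δ)_{w,p}`. -/
def OmegaMain (k : ℕ) (f : ℝ → ℝ) (δ : ℝ) (wt : ℝ → ℝ) (p : ℝ≥0∞) : ℝ≥0∞ :=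
  ⨆ h ∈ Ioc (0 : ℝ) δ,
    LpOn (fun x => wt x * symmDelta k (h * phiW x) f x) p
      (-1 + 2 * (k : ℝ) ^ 2 * h ^ 2) (1 - 2 * (k : ℝ) ^ 2 * h ^ 2)

/-- Forward part `Ω→_φ^k(f,δ)_{w,p}`. -/
def OmegaFwd (k : ℕ) (f : ℝ → ℝ) (δ : ℝ) (wt : ℝ → ℝ) (p : ℝ≥0∞) : ℝ≥0∞ :=
  ⨆ h ∈ Ioc (0 : ℝ) (2 * (k : ℝ) ^ 2 * δ ^ 2),
    LpOn (fun x => wt x * symmDelta k h f (x + k * h / 2)) p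
      (-1) (-1 + 2 * (k : ℝ) ^ 2 * δ ^ 2)

/-- Backward part `Ω←_φ^k(f,δ)_{w,p}`. -/
def OmegaBwd (k : ℕ) (f : ℝ → ℝ) (δ : ℝ) (wt : ℝ → ℝ) (p : ℝ≥0∞) : ℝ≥0∞ :=
  ⨆ h ∈ Ioc (0 : ℝ) (2 * (k : ℝ) ^ 2 * δ ^ 2),
    LpOn (fun x => wt x * symmDelta k h f (x - k * h / 2)) p
      (1 - 2 * (k : ℝ) ^ 2 * δ ^ 2) 1

/-- Weighted Ditzian–Totik modulus `ω_φ^k(f,δ)_{w,p}`. -/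
def omegaDT (k : ℕ) (f : ℝ → ℝ) (δ : ℝ) (wt : ℝ → ℝ) (p : ℝ≥0∞) : ℝ≥0∞ :=
  OmegaMain k f δ wt p + OmegaFwd k f δ wt p + OmegaBwd k f δ wt p

/-- `f` is `k`-monotone on `(-1,1)`: all `k`-th divided differences over `k+1` distinct
points of `(-1,1)` are nonnegative. -/
def kMonotoneOn (k : ℕ) (f : ℝ → ℝ) : Prop :=
  ∀ x : Fin (k + 1) → ℝ, Function.Injective x → (∀ i, x i ∈ Ioo (-1 : ℝ) 1) →
    0 ≤ ∑ i, f (x i) / ∏ j ∈ Finset.univ.erase i, (x i - x j)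

/-- `M_+^k`, the `k`-monotone functions on `(-1,1)` vanishing on `(-1,0]`. -/
def MPlus (k : ℕ) : Set (ℝ → ℝ) :=
  {f | kMonotoneOn k f ∧ ∀ x : ℝ, -1 < x → x ≤ 0 → f x = 0}

/-- `W_p^{α,β}`: (Lebesgue) measurable on `[-1,1]` with finite weighted norm. -/
def WSet (p : ℝ≥0∞) (α β : ℝ) : Set (ℝ → ℝ) :=
  {f | AEMeasurable f (volume.restrict (Icc (-1 : ℝ) 1)) ∧
    LpOn (fun x => jacobi α β x * f x) p (-1) 1 ≠ ⊤}

/-- `‖w_{β,β} f‖` in `L¹[1 - 3k²δ², 1]`. -/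
def endTerm (k : ℕ) (β : ℝ) (f : ℝ → ℝ) (δ : ℝ) : ℝ≥0∞ :=
  LpOn (fun x => jacobi β β x * f x) 1 (1 - 3 * (k : ℝ) ^ 2 * δ ^ 2) 1

/-- The supremum over `0 < h ≤ δ` of `h^k` times the norm of
`(1-y²)^{-k/2} w_{β,β}(y) f(y)` in `L¹[0, 1 - 2k²h²]`. -/
def innerTerm (k : ℕ) (β : ℝ) (f : ℝ → ℝ) (δ : ℝ) : ℝ≥0∞ :=
  ⨆ h ∈ Ioc (0 : ℝ) δ,
    ENNReal.ofReal (h ^ k) *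
      LpOn (fun y => (1 - y ^ 2) ^ (-(k : ℝ) / 2) * (jacobi β β y * f y)) 1
        0 (1 - 2 * (k : ℝ) ^ 2 * h ^ 2)

end

/-- The node product `∏_{j ≠ i} (i - j)` over `0, …, k`. -/
theorem prod_erase_range_sub (i m : ℕ) :
    ∏ j ∈ (Finset.range (i + m + 1)).erase i, ((i : ℝ) - j) =
      (-1) ^ m * (i.factorial * m.factorial) := by
  induction m with
  | zero =>
    have h : (Finset.range (i + 0 + 1)).erase i = Finset.range i := by
      ext j; simp only [Finset.mem_erase, Finset.mem_range]; omega
    rw [h, ← Finset.prod_range_reflect]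
    have : ∀ j ∈ Finset.range i, ((i : ℝ) - ((i - 1 - j : ℕ) : ℝ)) = ((j + 1 : ℕ) : ℝ) := by
      intro j hj
      rw [Finset.mem_range] at hj
      have : i = (i - 1 - j) + (j + 1) := by omega
      nth_rewrite 1 [this]
      push_cast; ring
    rw [Finset.prod_congr rfl this, ← Nat.cast_prod, Finset.prod_range_add_one_eq_factorial]
    simp
  | succ m ih =>
    have h : (Finset.range (i + (m + 1) + 1)).erase i =
        insert (i + m + 1) ((Finset.range (i + m + 1)).erase i) := by
      ext j; simp only [Finset.mem_erase, Finset.mem_range, Finset.mem_insert]; omega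
    rw [h, Finset.prod_insert (by simp), ih, Nat.factorial_succ]
    push_cast; ring

/-- Equally spaced `k`-th differences of a `k`-monotone function are nonnegative. -/
theorem kMonotoneOn.sum_choose_nonneg {k : ℕ} {f : ℝ → ℝ} (hf : kMonotoneOn k f) {c s : ℝ}
    (hs : 0 < s) (hc : -1 < c) (hc' : c + k * s < 1) :
    0 ≤ ∑ i ∈ Finset.range (k + 1), ((k.choose i : ℝ) * (-1 : ℝ) ^ (k - i) * f (c + i * s)) := by
  have h := hf (fun i => c + (i : ℕ) * s)
    (fun i j hij => by
      have : ((i : ℕ) : ℝ) * s = (j : ℕ) * s := by simpa using hij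
      exact Fin.ext (by exact_mod_cast mul_right_cancel₀ hs.ne' this))
    (fun i => by
      have h1 : ((i : ℕ) : ℝ) ≤ k := by exact_mod_cast Nat.lt_succ_iff.mp i.2
      have h2 := mul_le_mul_of_nonneg_right h1 hs.le
      have h3 : 0 ≤ ((i : ℕ) : ℝ) * s := by positivity
      exact ⟨by linarith, by linarith⟩)
  have key : ∀ i : Fin (k + 1), ∏ j ∈ Finset.univ.erase i, (c + (i : ℕ) * s - (c + (j : ℕ) * s)) =
      s ^ k * ((-1) ^ (k - i) * ((i : ℕ).factorial * (k - i : ℕ).factorial)) := by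
    intro i
    have hi : (i : ℕ) ≤ k := Nat.lt_succ_iff.mp i.2
    have e1 : ∏ j ∈ Finset.univ.erase i, (c + (i : ℕ) * s - (c + (j : ℕ) * s)) =
        ∏ j ∈ Finset.univ.erase i, s * (((i : ℕ) : ℝ) - (j : ℕ)) :=
      Finset.prod_congr rfl fun j _ => by ring
    rw [e1, Finset.prod_mul_distrib, Finset.prod_const, Finset.card_erase_of_mem (Finset.mem_univ _),
      Finset.card_univ, Fintype.card_fin, Nat.add_sub_cancel]
    congr 1
    rw [← prod_erase_range_sub, show (i : ℕ) + (k - i) + 1 = k + 1 by omega]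
    refine (Finset.prod_map (Finset.univ.erase i) Fin.valEmbedding
      (fun j : ℕ => ((i : ℕ) : ℝ) - j)).symm.trans ?_
    congr 1
    rw [Finset.map_erase, Fin.map_valEmbedding_univ]
    ext j; simp
  rw [Finset.sum_range]
  have e2 : ∑ i : Fin (k + 1), ((k.choose i : ℝ) * (-1 : ℝ) ^ (k - (i : ℕ)) * f (c + (i : ℕ) * s)) =
      (s ^ k * k.factorial) * ∑ i : Fin (k + 1), f (c + (i : ℕ) * s) /
        ∏ j ∈ Finset.univ.erase i, (c + (i : ℕ) * s - (c + (j : ℕ) * s)) := by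
    rw [Finset.mul_sum]
    refine Finset.sum_congr rfl fun i _ => ?_
    have hi : (i : ℕ) ≤ k := Nat.lt_succ_iff.mp i.2
    rw [key, Nat.cast_choose ℝ hi]
    have h1 : ((-1 : ℝ) ^ (k - (i : ℕ))) * (-1) ^ (k - (i : ℕ)) = 1 := by
      rw [← mul_pow]; norm_num
    have h2 : ((-1 : ℝ) ^ (k - (i : ℕ))) ≠ 0 := pow_ne_zero _ (by norm_num)
    have h3 : ((i : ℕ).factorial : ℝ) ≠ 0 := by positivity
    have h4 : ((k - (i : ℕ)).factorial : ℝ) ≠ 0 := by positivity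
    field_simp
    linear_combination (f (c + (i : ℕ) * s)) * h1
  rw [e2]
  positivity

/-- Comparison of the values of `f ∈ M_+^k` at two nonnegative points, from the divided difference
at these points and `k - 1` negative ones. -/
theorem exists_one_le_mul_le_of_mem_MPlus {k : ℕ} (hk : 1 ≤ k) {f : ℝ → ℝ} (hf : f ∈ MPlus k) {x y : ℝ}
    (hx : 0 ≤ x) (hxy : x < y) (hy : y < 1) : ∃ r : ℝ, 1 ≤ r ∧ r * f x ≤ f y := by
  obtain ⟨n, rfl⟩ : ∃ n, k = n + 1 := ⟨k - 1, by omega⟩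
  set q : Fin n → ℝ := fun j => -(((j : ℕ) : ℝ) + 1) / (n + 1) with hq
  have hqneg : ∀ j, q j < 0 := fun j => by
    simp only [hq]; apply div_neg_of_neg_of_pos <;> [skip; positivity]
    have : (0 : ℝ) ≤ (j : ℕ) := by positivity
    linarith
  have hqgt : ∀ j, -1 < q j := fun j => by
    simp only [hq]
    rw [lt_div_iff₀ (by positivity)]
    have : ((j : ℕ) : ℝ) < n := by exact_mod_cast j.2
    linarith
  have hqinj : Function.Injective q := fun i j hij => by
    simp only [hq] at hij
    have h0 : ((n : ℝ) + 1) ≠ 0 := by positivity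
    rw [div_left_inj' h0] at hij
    have : ((i : ℕ) : ℝ) = (j : ℕ) := by linarith
    exact Fin.ext (by exact_mod_cast this)
  set p : Fin (n + 1 + 1) → ℝ := Fin.cons y (Fin.cons x q) with hp
  have hinj : Function.Injective p := by
    rw [hp, Fin.cons_injective_iff, Fin.cons_injective_iff]
    refine ⟨?_, ?_, hqinj⟩
    · rintro ⟨j, hj⟩
      refine Fin.cases (fun h => ?_) (fun i h => ?_) j hj
      · simp at h; linarith
      · have := hqneg i; simp at h; linarith
    · rintro ⟨j, hj⟩
      have := hqneg j; linarith
  have hmem : ∀ i, p i ∈ Ioo (-1 : ℝ) 1 := by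
    intro i
    refine Fin.cases ?_ (fun i => ?_) i
    · simp only [hp, Fin.cons_zero]; exact ⟨by linarith, hy⟩
    · refine Fin.cases ?_ (fun i => ?_) i
      · simp only [hp, Fin.cons_succ, Fin.cons_zero]; exact ⟨by linarith, by linarith⟩
      · simp only [hp, Fin.cons_succ]; exact ⟨hqgt i, by linarith [hqneg i]⟩
  have h := hf.1 p hinj hmem
  rw [Fin.sum_univ_succ, Fin.sum_univ_succ, Finset.sum_eq_zero (fun i _ => ?_), add_zero] at h
  swap
  · have : f (p i.succ.succ) = 0 := by
      simp only [hp, Fin.cons_succ]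
      exact hf.2 _ (hqgt i) (hqneg i).le
    rw [this, zero_div]
  have hp0 : p 0 = y := rfl
  have hp1 : p (Fin.succ 0) = x := rfl
  have h01 : (Fin.succ 0 : Fin (n + 1 + 1)) ≠ 0 := Fin.succ_ne_zero 0
  rw [← Finset.mul_prod_erase (Finset.univ.erase 0) _ (Finset.mem_erase.mpr ⟨h01, Finset.mem_univ _⟩),
    ← Finset.mul_prod_erase (Finset.univ.erase (Fin.succ 0)) _
      (Finset.mem_erase.mpr ⟨h01.symm, Finset.mem_univ _⟩),
    Finset.erase_right_comm (a := (Fin.succ 0 : Fin (n + 1 + 1))), hp0, hp1] at h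
  set E := (Finset.univ.erase (0 : Fin (n + 1 + 1))).erase (Fin.succ 0) with hE
  have hlt : ∀ j ∈ E, p j < 0 := by
    intro j hj
    rw [hE, Finset.mem_erase, Finset.mem_erase] at hj
    obtain ⟨j1, j0, -⟩ := hj
    obtain ⟨j', rfl⟩ := Fin.exists_succ_eq_of_ne_zero j0
    obtain ⟨j'', rfl⟩ := Fin.exists_succ_eq_of_ne_zero (fun h : j' = 0 => j1 (by rw [h]))
    simpa [hp] using hqneg j''
  have hA : 0 < ∏ j ∈ E, (x - p j) := Finset.prod_pos fun j hj => by linarith [hlt j hj]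
  have hAB : ∏ j ∈ E, (x - p j) ≤ ∏ j ∈ E, (y - p j) :=
    Finset.prod_le_prod (fun j hj => by linarith [hlt j hj]) fun j hj => by linarith
  set A := ∏ j ∈ E, (x - p j)
  set B := ∏ j ∈ E, (y - p j)
  have hB : 0 < B := hA.trans_le hAB
  have hd : 0 < y - x := by linarith
  refine ⟨B / A, by rwa [le_div_iff₀ hA, one_mul], ?_⟩
  have e : f y / ((y - x) * B) + f x / ((x - y) * A) = (f y - B / A * f x) / ((y - x) * B) := by
    have : x - y ≠ 0 := by linarith
    have h' : y - x ≠ 0 := hd.ne'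
    rw [show x - y = -(y - x) by ring]
    field_simp
    ring
  rw [e] at h
  have := (div_nonneg_iff.mp h).resolve_right (fun h => by
    have := h.2; have : 0 < (y - x) * B := by positivity
    linarith)
  linarith [this.1]

theorem nonneg_of_mem_MPlus {k : ℕ} (hk : 1 ≤ k) {f : ℝ → ℝ} (hf : f ∈ MPlus k) {y : ℝ}
    (hy : -1 < y) (hy' : y < 1) : 0 ≤ f y := by
  rcases le_or_gt y 0 with h | h
  · exact (hf.2 y hy h).ge
  · obtain ⟨r, -, hr⟩ := exists_one_le_mul_le_of_mem_MPlus hk hf le_rfl h hy'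
    rwa [hf.2 0 (by norm_num) le_rfl, mul_zero] at hr

theorem monotone_of_mem_MPlus {k : ℕ} (hk : 1 ≤ k) {f : ℝ → ℝ} (hf : f ∈ MPlus k) {x y : ℝ}
    (hx : -1 < x) (hxy : x ≤ y) (hy : y < 1) : f x ≤ f y := by
  rcases le_or_gt x 0 with h | h
  · rw [hf.2 x hx h]; exact nonneg_of_mem_MPlus hk hf (hx.trans_le hxy) hy
  rcases hxy.eq_or_lt with rfl | hlt
  · exact le_rfl
  obtain ⟨r, hr1, hr⟩ := exists_one_le_mul_le_of_mem_MPlus hk hf h.le hlt hy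
  have := nonneg_of_mem_MPlus hk hf hx (hlt.trans hy)
  nlinarith

/-- A `k`-th difference with rightmost node `y` is at most `2^k f(y)` in absolute value. -/
theorem abs_sum_choose_le_of_mem_MPlus {k : ℕ} (hk : 1 ≤ k) {f : ℝ → ℝ} (hf : f ∈ MPlus k) {c s : ℝ}
    (hs : 0 < s) (hc : -1 < c) (hc' : c + k * s < 1) :
    |∑ i ∈ Finset.range (k + 1), ((k.choose i : ℝ) * (-1 : ℝ) ^ (k - i) * f (c + i * s))| ≤
      2 ^ k * f (c + k * s) := by
  refine (Finset.abs_sum_le_sum_abs _ _).trans ?_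
  have : (2 : ℝ) ^ k = ∑ i ∈ Finset.range (k + 1), (k.choose i : ℝ) := by
    exact_mod_cast (Nat.sum_range_choose k).symm
  rw [this, Finset.sum_mul]
  refine Finset.sum_le_sum fun i hi => ?_
  have hi' : (i : ℝ) ≤ k := by exact_mod_cast Nat.lt_succ_iff.mp (Finset.mem_range.mp hi)
  have h1 := mul_le_mul_of_nonneg_right hi' hs.le
  have h2 : 0 ≤ (i : ℝ) * s := by positivity
  rw [abs_mul, abs_mul, abs_pow, abs_neg, abs_one, one_pow, mul_one, Nat.abs_cast,
    abs_of_nonneg (nonneg_of_mem_MPlus hk hf (by linarith) (by linarith))]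
  exact mul_le_mul_of_nonneg_left
    (monotone_of_mem_MPlus hk hf (by linarith) (by linarith) hc') (by positivity)

open scoped ContDiff

/-- A `k`-th forward difference is bounded by the `k`-th derivative. -/
theorem abs_fwdDiff_iter_le {k : ℕ} {F : ℕ → ℝ → ℝ} {c η M : ℝ} (hη : 0 ≤ η)
    (hF : ∀ j x, HasDerivAt (F j) (F (j + 1) x) x)
    (hM : ∀ x ∈ Icc c (c + k * η), |F k x| ≤ M) : |(fwdDiff η)^[k] (F 0) c| ≤ M * η ^ k := by
  induction k generalizing F M with
  | zero => simpa using hM c (by simp)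
  | succ k ih =>
    rw [Function.iterate_succ_apply, pow_succ', ← mul_assoc]
    refine ih (F := fun j => fwdDiff η (F j)) (fun j x => ?_) fun x hx => ?_
    · exact ((hF j (x + η)).comp_add_const x η).sub (hF j x)
    · have h := norm_image_sub_le_of_norm_deriv_le_segment' (a := x) (b := x + η) (C := M)
        (fun z _ => (hF k z).hasDerivWithinAt) (fun z hz => ?_) (x + η) ⟨by linarith, le_rfl⟩
      · simpa [fwdDiff] using h
      · refine hM z ⟨hx.1.trans hz.1, ?_⟩
        push_cast
        linarith [hx.2, hz.2]

theorem exists_abs_fwdDiff_iter_le_of_contDiff {F : ℝ × ℝ → ℝ} (hF : ContDiff ℝ ∞ F) (k : ℕ)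
    {K : Set ℝ} (hK : IsCompact K) (a b : ℝ) :
    ∃ M > 0, ∀ θ ∈ K, ∀ c η, 0 ≤ η → a ≤ c → c + k * η ≤ b →
      |(fwdDiff η)^[k] (fun t => F (θ, t)) c| ≤ M * η ^ k := by
  set D : (ℝ × ℝ → ℝ) → ℝ × ℝ → ℝ := fun G p => fderiv ℝ G p (0, 1) with hD
  have hsm : ∀ j, ContDiff ℝ ∞ (D^[j] F) := by
    intro j
    induction j with
    | zero => exact hF
    | succ j ih =>
      rw [Function.iterate_succ_apply']
      exact (ih.fderiv_right (m := ∞) (by simp)).clm_apply contDiff_const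
  obtain ⟨M, hM⟩ := (hK.prod (isCompact_Icc (a := a) (b := b))).exists_bound_of_continuousOn
    (hsm k).continuous.continuousOn
  refine ⟨max M 1, by positivity, fun θ hθ c η hη hc hc' => ?_⟩
  refine abs_fwdDiff_iter_le (F := fun j t => (D^[j] F) (θ, t)) hη (fun j t => ?_) fun t ht => ?_
  · rw [Function.iterate_succ_apply']
    have h1 := (((hsm j).differentiable (by simp)) (θ, t)).hasFDerivAt
    have h2 : HasDerivAt (fun t : ℝ => (θ, t)) (0, 1) t :=
      (hasDerivAt_const t θ).prodMk (hasDerivAt_id t)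
    exact h1.comp_hasDerivAt t h2
  · exact (hM (θ, t) ⟨hθ, hc.trans ht.1, ht.2.trans hc'⟩).trans (le_max_left _ _)

/-- The kernel arising from the substitution `y = x + a φ(x)`, with `b = a / φ(y)`. -/
noncomputable def shiftKernel (β y b : ℝ) : ℝ :=
  (1 + b ^ 2) ^ (-(1 / 2) : ℝ) * (Real.sqrt (1 + b ^ 2) - b * y) ^ (-2 * β - 1)

theorem sqrt_one_add_sq_sub_mul_pos {y : ℝ} (hy : y ∈ Icc (-1 : ℝ) 1) (b : ℝ) :
    0 < Real.sqrt (1 + b ^ 2) - b * y := by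
  have h1 : |b| < Real.sqrt (1 + b ^ 2) := by
    rw [← Real.sqrt_sq_eq_abs]
    exact Real.sqrt_lt_sqrt (sq_nonneg b) (by linarith)
  have h2 : b * y ≤ |b| := by
    calc b * y ≤ |b * y| := le_abs_self _
      _ = |b| * |y| := abs_mul _ _
      _ ≤ |b| * 1 := mul_le_mul_of_nonneg_left (abs_le.mpr hy) (abs_nonneg b)
      _ = |b| := mul_one _
  linarith

theorem shiftKernel_nonneg (β : ℝ) {y : ℝ} (hy : y ∈ Icc (-1 : ℝ) 1) (b : ℝ) :
    0 ≤ shiftKernel β y b := by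
  have := sqrt_one_add_sq_sub_mul_pos hy b
  unfold shiftKernel
  positivity

theorem contDiff_shiftKernel_sin (β : ℝ) :
    ContDiff ℝ ∞ (fun p : ℝ × ℝ => shiftKernel β (Real.sin p.1) p.2) := by
  unfold shiftKernel
  have h0 : ContDiff ℝ ∞ (fun p : ℝ × ℝ => 1 + p.2 ^ 2) := contDiff_const.add (contDiff_snd.pow 2)
  have hne : ∀ p : ℝ × ℝ, 1 + p.2 ^ 2 ≠ 0 := fun p => by positivity
  refine (h0.rpow_const_of_ne hne).mul (ContDiff.rpow_const_of_ne ?_ fun p => ?_)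
  · exact (h0.sqrt hne).sub (contDiff_snd.mul (Real.contDiff_sin.comp contDiff_fst))
  · exact (sqrt_one_add_sq_sub_mul_pos (Real.sin_mem_Icc _) _).ne'

theorem exists_shiftKernel_bounds (k : ℕ) (β : ℝ) : ∃ M > 0,
    (∀ y ∈ Icc (-1 : ℝ) 1, ∀ b ∈ Icc (-1 : ℝ) 1, shiftKernel β y b ≤ M) ∧
    ∀ y ∈ Icc (-1 : ℝ) 1, ∀ η : ℝ, 0 ≤ η → k * η ≤ 2 →
      |∑ i ∈ Finset.range (k + 1),
        (k.choose i : ℝ) * (-1 : ℝ) ^ (k - i) * shiftKernel β y (((i : ℝ) - k / 2) * η)| ≤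
        M * η ^ k := by
  obtain ⟨M₁, hM₁, h₁⟩ := exists_abs_fwdDiff_iter_le_of_contDiff (contDiff_shiftKernel_sin β) 0
    (isCompact_Icc (a := -(Real.pi / 2)) (b := Real.pi / 2)) (-1) 1
  obtain ⟨M₂, hM₂, h₂⟩ := exists_abs_fwdDiff_iter_le_of_contDiff (contDiff_shiftKernel_sin β) k
    (isCompact_Icc (a := -(Real.pi / 2)) (b := Real.pi / 2)) (-1) 1
  refine ⟨max M₁ M₂, by positivity, fun y hy b hb => ?_, fun y hy η hη hkη => ?_⟩
  · have h := h₁ (Real.arcsin y) (Real.arcsin_mem_Icc y) b 0 le_rfl hb.1 (by simpa using hb.2)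
    simp only [Function.iterate_zero, id_eq, pow_zero, mul_one, Real.sin_arcsin hy.1 hy.2] at h
    exact (le_abs_self _).trans (h.trans (le_max_left _ _))
  · have h := h₂ (Real.arcsin y) (Real.arcsin_mem_Icc y) (-(k / 2) * η) η hη (by linarith)
      (by linarith)
    rw [fwdDiff_iter_eq_sum_shift] at h
    simp only [Real.sin_arcsin hy.1 hy.2] at h
    refine le_trans (le_of_eq ?_) (h.trans (mul_le_mul_of_nonneg_right (le_max_right _ _)
      (by positivity)))
    congr 1
    refine Finset.sum_congr rfl fun i _ => ?_
    rw [zsmul_eq_mul, nsmul_eq_mul]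
    push_cast
    rw [show -((k : ℝ) / 2) * η + i * η = ((i : ℝ) - k / 2) * η by ring]
    ring

theorem phiW_sq {x : ℝ} (hx : x ∈ Icc (-1 : ℝ) 1) : phiW x ^ 2 = 1 - x ^ 2 :=
  Real.sq_sqrt (by nlinarith [hx.1, hx.2])

theorem phiW_pos {x : ℝ} (hx : x ∈ Ioo (-1 : ℝ) 1) : 0 < phiW x :=
  Real.sqrt_pos.mpr (by nlinarith [hx.1, hx.2])

theorem phiW_le_one (x : ℝ) : phiW x ≤ 1 :=
  Real.sqrt_le_one.mpr (by nlinarith [sq_nonneg x])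

theorem continuous_phiW : Continuous phiW := by
  unfold phiW; fun_prop

theorem jacobi_eq_phiW_rpow (β : ℝ) {x : ℝ} (hx : x ∈ Icc (-1 : ℝ) 1) :
    jacobi β β x = phiW x ^ (2 * β) := by
  have h0 : 0 ≤ phiW x := Real.sqrt_nonneg _
  rw [jacobi, ← Real.mul_rpow (by linarith [hx.1]) (by linarith [hx.2]), Real.rpow_mul h0]
  congr 1
  rw [Real.rpow_two, phiW_sq hx]
  ring

theorem jacobi_nonneg (α β : ℝ) {x : ℝ} (hx : x ∈ Icc (-1 : ℝ) 1) : 0 ≤ jacobi α β x :=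
  mul_nonneg (Real.rpow_nonneg (by linarith [hx.1]) _) (Real.rpow_nonneg (by linarith [hx.2]) _)

theorem measurable_jacobi (α β : ℝ) : Measurable (jacobi α β) := by
  unfold jacobi; fun_prop

theorem measurable_shiftKernel_comp (β a : ℝ) :
    Measurable (fun y => shiftKernel β y (a / phiW y)) := by
  have := continuous_phiW.measurable
  unfold shiftKernel; fun_prop

section Shift

variable {κ a x : ℝ}

theorem Icc_subset_Ioo_neg_one_one (hκ : 0 < κ) (hx : x ∈ Icc (-(1 / 4) : ℝ) (1 - 2 * κ ^ 2)) :
    x ∈ Ioo (-1 : ℝ) 1 :=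
  ⟨by linarith [hx.1], by nlinarith [hx.2]⟩

theorem abs_shift_lt_phiW (hκ : 0 < κ) (ha : |a| ≤ κ / 2)
    (hx : x ∈ Icc (-(1 / 4) : ℝ) (1 - 2 * κ ^ 2)) : |a| < phiW x := by
  have hx' := Icc_subset_Ioo_neg_one_one hκ hx
  have h1 := phiW_sq (Ioo_subset_Icc_self hx')
  have h2 : κ ^ 2 < phiW x ^ 2 := by nlinarith [hx.1, hx.2]
  have h3 := lt_of_pow_lt_pow_left₀ 2 (phiW_pos hx').le h2
  linarith

theorem mul_phiW_le_one_sub (hκ : 0 < κ) (hx : x ∈ Icc (-(1 / 4) : ℝ) (1 - 2 * κ ^ 2)) :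
    κ * phiW x ≤ 1 - x := by
  have hx' := Icc_subset_Ioo_neg_one_one hκ hx
  have h1 := phiW_sq (Ioo_subset_Icc_self hx')
  refine le_of_sq_le_sq ?_ (by linarith [hx'.2])
  rw [mul_pow, h1]
  have h2 : κ ^ 2 ≤ (1 - x) / 2 := by linarith [hx.2]
  have h3 : 1 - x ^ 2 ≤ 2 * (1 - x) := by nlinarith [sq_nonneg (1 - x)]
  have h4 : 0 ≤ 1 - x ^ 2 := h1 ▸ sq_nonneg _
  have h5 : 0 ≤ 1 - x := by linarith [hx'.2]
  calc κ ^ 2 * (1 - x ^ 2) ≤ (1 - x) / 2 * (2 * (1 - x)) := by gcongr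
    _ = (1 - x) ^ 2 := by ring

theorem shift_mem_Icc (hκ : 0 < κ) (hκ' : κ ≤ 1 / 2) (ha : |a| ≤ κ / 2)
    (hx : x ∈ Icc (-(1 / 4) : ℝ) (1 - 2 * κ ^ 2)) :
    x + a * phiW x ∈ Icc (-(1 / 2) : ℝ) (1 - κ ^ 2) := by
  have hx' := Icc_subset_Ioo_neg_one_one hκ hx
  have h0 := (phiW_pos hx').le
  have h1 := phiW_le_one x
  obtain ⟨h2, h3⟩ := abs_le.mp ha
  constructor
  · nlinarith [hx.1]
  · have := mul_phiW_le_one_sub hκ hx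
    nlinarith [hx.2]

theorem hasDerivAt_shift (hx : x ∈ Ioo (-1 : ℝ) 1) :
    HasDerivAt (fun x => x + a * phiW x) (1 - a * x / phiW x) x := by
  have h1 : HasDerivAt (fun x : ℝ => 1 - x ^ 2) (-(2 * x)) x := by
    simpa using ((hasDerivAt_pow 2 x).const_sub 1)
  have h2 := h1.sqrt (by nlinarith [hx.1, hx.2])
  have h3 := (hasDerivAt_id x).add (h2.const_mul a)
  refine h3.congr_deriv ?_
  change 1 + a * (-(2 * x) / (2 * phiW x)) = _
  have := (phiW_pos hx).ne'
  field_simp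
  ring

theorem shift_deriv_pos (hκ : 0 < κ) (ha : |a| ≤ κ / 2)
    (hx : x ∈ Icc (-(1 / 4) : ℝ) (1 - 2 * κ ^ 2)) : 0 < 1 - a * x / phiW x := by
  have hx' := Icc_subset_Ioo_neg_one_one hκ hx
  have h0 := phiW_pos hx'
  rw [sub_pos, div_lt_one h0]
  calc a * x ≤ |a * x| := le_abs_self _
    _ = |a| * |x| := abs_mul _ _
    _ ≤ |a| * 1 := mul_le_mul_of_nonneg_left (abs_le.mpr ⟨hx'.1.le, hx'.2.le⟩) (abs_nonneg a)
    _ < phiW x := by rw [mul_one]; exact abs_shift_lt_phiW hκ ha hx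

theorem injOn_shift (hκ : 0 < κ) (ha : |a| ≤ κ / 2) :
    InjOn (fun x => x + a * phiW x) (Icc (-(1 / 4) : ℝ) (1 - 2 * κ ^ 2)) := by
  refine (strictMonoOn_of_deriv_pos (convex_Icc _ _)
    (continuous_id.add (continuous_const.mul continuous_phiW)).continuousOn fun x hx => ?_).injOn
  have hx := interior_subset hx
  have h := (hasDerivAt_shift (a := a) (Icc_subset_Ioo_neg_one_one hκ hx)).deriv
  change 0 < deriv (fun x => x + a * phiW x) x
  rw [h]
  exact shift_deriv_pos hκ ha hx

theorem jacobi_mul_shiftKernel (β : ℝ) (hκ : 0 < κ) (hκ' : κ ≤ 1 / 2) (ha : |a| ≤ κ / 2)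
    (hx : x ∈ Icc (-(1 / 4) : ℝ) (1 - 2 * κ ^ 2)) :
    jacobi β β (x + a * phiW x) * shiftKernel β (x + a * phiW x) (a / phiW (x + a * phiW x)) *
      (1 - a * x / phiW x) = jacobi β β x := by
  have hx' := Icc_subset_Ioo_neg_one_one hκ hx
  have hy := shift_mem_Icc hκ hκ' ha hx
  have hy' : x + a * phiW x ∈ Ioo (-1 : ℝ) 1 := ⟨by linarith [hy.1], by nlinarith [hy.2]⟩
  have hd := shift_deriv_pos hκ ha hx
  have hφ := phiW_pos hx'
  have hφ2 := phiW_sq (Ioo_subset_Icc_self hx')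
  have hψ := phiW_pos hy'
  have hψ2 := phiW_sq (Ioo_subset_Icc_self hy')
  rw [jacobi_eq_phiW_rpow β (Ioo_subset_Icc_self hx'), jacobi_eq_phiW_rpow β (Ioo_subset_Icc_self hy'),
    shiftKernel]
  set y := x + a * phiW x with hydef
  set φ := phiW x
  set ψ := phiW y
  have he : 0 < φ - a * x := by
    have : φ - a * x = φ * (1 - a * x / φ) := by field_simp
    rw [this]; positivity
  have hsum : 1 + (a / ψ) ^ 2 = ((φ - a * x) / ψ) ^ 2 := by
    field_simp
    rw [hψ2, hydef]
    linear_combination (-a ^ 2 - 1) * hφ2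
  have hq : 0 < (φ - a * x) / ψ := by positivity
  have hsqrt : Real.sqrt (1 + (a / ψ) ^ 2) = (φ - a * x) / ψ := by
    rw [hsum, Real.sqrt_sq hq.le]
  have hsub : (φ - a * x) / ψ - a / ψ * y = ψ / φ := by
    field_simp
    rw [hψ2, hydef]
    linear_combination hφ2
  have hinv : (1 + (a / ψ) ^ 2) ^ (-(1 / 2) : ℝ) = ψ / (φ - a * x) := by
    rw [Real.rpow_neg (by positivity), ← Real.sqrt_eq_rpow, hsqrt, inv_div]
  rw [hinv, hsqrt, hsub, Real.div_rpow hψ.le hφ.le, show (-2 * β - 1 : ℝ) = -(2 * β + 1) by ring,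
    Real.rpow_neg hψ.le, Real.rpow_neg hφ.le, Real.rpow_add hψ, Real.rpow_add hφ, Real.rpow_one,
    Real.rpow_one]
  have h1 : φ ^ (2 * β) ≠ 0 := (Real.rpow_pos_of_pos hφ _).ne'
  have h2 : ψ ^ (2 * β) ≠ 0 := (Real.rpow_pos_of_pos hψ _).ne'
  have h3 := he.ne'
  have h4 := hφ.ne'
  have h5 := hψ.ne'
  field_simp

theorem one_sub_lt_of_notMem_shift_image {y : ℝ} (hκ : 0 < κ) (hκ' : κ ≤ 1 / 2) (ha : |a| ≤ κ / 2)
    (hy : 0 ≤ y)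
    (hy' : y ∉ (fun x => x + a * phiW x) '' Icc (-(1 / 4) : ℝ) (1 - 2 * κ ^ 2)) :
    1 - y < 3 * κ ^ 2 := by
  by_contra! hcon
  apply hy'
  have hle : (-(1 / 4) : ℝ) ≤ 1 - 2 * κ ^ 2 := by nlinarith
  refine intermediate_value_Icc hle
    (continuous_id.add (continuous_const.mul continuous_phiW)).continuousOn ⟨?_, ?_⟩
  · change -(1 / 4) + a * phiW (-(1 / 4)) ≤ y
    have h0 : 0 ≤ phiW (-(1 / 4)) := Real.sqrt_nonneg _
    have h1 := phiW_le_one (-(1 / 4))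
    have := (abs_le.mp ha).2
    nlinarith
  · change y ≤ 1 - 2 * κ ^ 2 + a * phiW (1 - 2 * κ ^ 2)
    have h0 : 0 ≤ phiW (1 - 2 * κ ^ 2) := Real.sqrt_nonneg _
    have h1 := mul_phiW_le_one_sub hκ (right_mem_Icc.mpr hle)
    have := (abs_le.mp ha).1
    nlinarith

theorem abs_shift_div_phiW_le_one {y : ℝ} (hκ : 0 < κ) (ha : |a| ≤ κ / 2)
    (hy : y ∈ Icc (-(1 / 2) : ℝ) (1 - κ ^ 2)) : a / phiW y ∈ Icc (-1 : ℝ) 1 := by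
  have hy' : y ∈ Ioo (-1 : ℝ) 1 := ⟨by linarith [hy.1], by nlinarith [hy.2]⟩
  have h0 := phiW_pos hy'
  have h1 := phiW_sq (Ioo_subset_Icc_self hy')
  have h2 : (κ / 2) ^ 2 ≤ phiW y ^ 2 := by nlinarith [hy.1, hy.2]
  have h3 := le_of_sq_le_sq h2 h0.le
  rw [mem_Icc, ← abs_le, abs_div, abs_of_pos h0, div_le_one h0]
  linarith

end Shift

theorem lintegral_enorm_eq_LpOn (g : ℝ → ℝ) (a b : ℝ) :
    LpOn g 1 a b = ∫⁻ x in Icc a b, ‖g x‖ₑ := eLpNorm_one_eq_lintegral_enorm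

theorem integrableOn_of_mem_WSet {β : ℝ} {f : ℝ → ℝ} (hf : f ∈ WSet 1 β β) :
    IntegrableOn (fun x => jacobi β β x * f x) (Icc (-1) 1) := by
  refine memLp_one_iff_integrable.mp ⟨?_, lt_top_iff_ne_top.mpr hf.2⟩
  exact ((measurable_jacobi β β).aemeasurable.mul hf.1).aestronglyMeasurable

/-- The change of variables `y = x + a φ(x)` in the weighted integral of `f`. -/
theorem integrableOn_and_integral_shift {β : ℝ} {f : ℝ → ℝ} (hf : f ∈ WSet 1 β β) {κ a M : ℝ}
    (hκ : 0 < κ) (hκ' : κ ≤ 1 / 2) (ha : |a| ≤ κ / 2)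
    (hM : ∀ y ∈ Icc (-1 : ℝ) 1, ∀ b ∈ Icc (-1 : ℝ) 1, shiftKernel β y b ≤ M) :
    let I := Icc (-(1 / 4) : ℝ) (1 - 2 * κ ^ 2)
    let T := Icc (-(1 / 2) : ℝ) (1 - κ ^ 2)
    let G := ((fun x => x + a * phiW x) '' I).indicator
      (fun y => shiftKernel β y (a / phiW y) * (jacobi β β y * f y))
    IntegrableOn (fun x => jacobi β β x * f (x + a * phiW x)) I ∧ IntegrableOn G T ∧
      ∫ x in I, jacobi β β x * f (x + a * phiW x) = ∫ y in T, G y := by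
  intro I T G
  have hT : T ⊆ Icc (-1) 1 := Icc_subset_Icc (by norm_num) (by nlinarith)
  have hS : (fun x => x + a * phiW x) '' I ⊆ T := by
    rintro _ ⟨x, hx, rfl⟩
    exact shift_mem_Icc hκ hκ' ha hx
  have hSm : MeasurableSet ((fun x => x + a * phiW x) '' I) :=
    (isCompact_Icc.image (continuous_id.add (continuous_const.mul continuous_phiW))).measurableSet
  have hintg : IntegrableOn (fun y => shiftKernel β y (a / phiW y) * (jacobi β β y * f y)) T := by
    refine Integrable.bdd_mul (c := M) ((integrableOn_of_mem_WSet hf).mono_set hT)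
      (measurable_shiftKernel_comp β a).aestronglyMeasurable ?_
    refine (ae_restrict_iff' measurableSet_Icc).mpr (Eventually.of_forall fun y hy => ?_)
    rw [Real.norm_of_nonneg (shiftKernel_nonneg β (hT hy) _)]
    exact hM y (hT hy) _ (abs_shift_div_phiW_le_one hκ ha hy)
  have hder : ∀ x ∈ I, HasDerivWithinAt (fun x => x + a * phiW x) (1 - a * x / phiW x) I x :=
    fun x hx => (hasDerivAt_shift (Icc_subset_Ioo_neg_one_one hκ hx)).hasDerivWithinAt
  have hcongr : EqOn (fun x => |1 - a * x / phiW x| •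
      (shiftKernel β (x + a * phiW x) (a / phiW (x + a * phiW x)) *
        (jacobi β β (x + a * phiW x) * f (x + a * phiW x))))
      (fun x => jacobi β β x * f (x + a * phiW x)) I := by
    intro x hx
    simp only [smul_eq_mul]
    rw [abs_of_pos (shift_deriv_pos hκ ha hx)]
    linear_combination f (x + a * phiW x) * jacobi_mul_shiftKernel β hκ hκ' ha hx
  refine ⟨?_, hintg.indicator hSm, ?_⟩
  · rw [← integrableOn_congr_fun hcongr measurableSet_Icc]
    exact (integrableOn_image_iff_integrableOn_abs_deriv_smul measurableSet_Icc hder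
      (injOn_shift hκ ha) (fun y => shiftKernel β y (a / phiW y) * (jacobi β β y * f y))).mp
        (hintg.mono_set hS)
  · rw [← setIntegral_congr_fun measurableSet_Icc hcongr,
      ← integral_image_eq_integral_abs_deriv_smul measurableSet_Icc hder (injOn_shift hκ ha)
        (fun y => shiftKernel β y (a / phiW y) * (jacobi β β y * f y)),
      setIntegral_indicator hSm, inter_eq_self_of_subset_right hS]

/-- The alternating sum of shifted kernels, each cut off to the image of its shift. -/
theorem abs_sum_choose_indicator_le {k : ℕ} (hk : 1 ≤ k) {β M : ℝ} (hM0 : 0 < M)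
    (hM : ∀ y ∈ Icc (-1 : ℝ) 1, ∀ b ∈ Icc (-1 : ℝ) 1, shiftKernel β y b ≤ M)
    (hdiff : ∀ y ∈ Icc (-1 : ℝ) 1, ∀ η : ℝ, 0 ≤ η → k * η ≤ 2 →
      |∑ i ∈ Finset.range (k + 1),
        (k.choose i : ℝ) * (-1 : ℝ) ^ (k - i) * shiftKernel β y (((i : ℝ) - k / 2) * η)| ≤
        M * η ^ k)
    {h : ℝ} (hh : 0 < h) (hkh : k * h ≤ 1 / 2) {S : ℕ → Set ℝ}
    (hS : ∀ i, S i = (fun x => x + (((i : ℝ) - k / 2) * h) * phiW x) ''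
      Icc (-(1 / 4) : ℝ) (1 - 2 * (k * h) ^ 2))
    {y : ℝ} (hy : y ∈ Icc (0 : ℝ) (1 - (k * h) ^ 2)) :
    |∑ i ∈ Finset.range (k + 1), (k.choose i : ℝ) * (-1 : ℝ) ^ (k - i) *
      (S i).indicator (fun y => shiftKernel β y ((((i : ℝ) - k / 2) * h) / phiW y)) y| ≤
      M * 2 ^ k * (3 * k) ^ k * (h / phiW y) ^ k := by
  have hk' : (1 : ℝ) ≤ k := by exact_mod_cast hk
  have hκ : 0 < k * h := by positivity
  have hyI : y ∈ Ioo (-1 : ℝ) 1 := ⟨by linarith [hy.1], by nlinarith [hy.2]⟩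
  have hyc := Ioo_subset_Icc_self hyI
  have hφ := phiW_pos hyI
  have hφ2 := phiW_sq hyc
  have ha : ∀ i ∈ Finset.range (k + 1), |((i : ℝ) - k / 2) * h| ≤ k * h / 2 := by
    intro i hi
    have hi' : (i : ℝ) ≤ k := by exact_mod_cast Nat.lt_succ_iff.mp (Finset.mem_range.mp hi)
    have : (0 : ℝ) ≤ i := by positivity
    rw [abs_mul, abs_of_pos hh]
    have : |(i : ℝ) - k / 2| ≤ k / 2 := abs_le.mpr ⟨by linarith, by linarith⟩
    nlinarith
  have hη : 0 < h / phiW y := by positivity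
  by_cases hall : ∀ i ∈ Finset.range (k + 1), y ∈ S i
  · have e : ∑ i ∈ Finset.range (k + 1), (k.choose i : ℝ) * (-1 : ℝ) ^ (k - i) *
        (S i).indicator (fun y => shiftKernel β y ((((i : ℝ) - k / 2) * h) / phiW y)) y =
        ∑ i ∈ Finset.range (k + 1), (k.choose i : ℝ) * (-1 : ℝ) ^ (k - i) *
          shiftKernel β y (((i : ℝ) - k / 2) * (h / phiW y)) := by
      refine Finset.sum_congr rfl fun i hi => ?_
      rw [indicator_of_mem (hall i hi), mul_div_assoc]
    rw [e]
    refine (hdiff y hyc _ hη.le ?_).trans ?_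
    · rw [← mul_div_assoc, div_le_iff₀ hφ]
      have : k * h ≤ phiW y := le_of_sq_le_sq (by nlinarith [hy.1, hy.2]) hφ.le
      linarith
    · refine mul_le_mul_of_nonneg_right ?_ (by positivity)
      have h1 : (1 : ℝ) ≤ 2 ^ k := one_le_pow₀ (by norm_num)
      have h2 : (1 : ℝ) ≤ (3 * k) ^ k := one_le_pow₀ (by linarith)
      rw [mul_assoc]
      exact le_mul_of_one_le_right hM0.le (one_le_mul_of_one_le_of_one_le h1 h2)
  · push Not at hall
    obtain ⟨i₀, hi₀, hy₀⟩ := hall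
    rw [hS] at hy₀
    have hlt := one_sub_lt_of_notMem_shift_image hκ hkh (ha i₀ hi₀) hy.1 hy₀
    have h1 : (1 : ℝ) ≤ 3 * k * (h / phiW y) := by
      rw [← mul_div_assoc, one_le_div hφ]
      refine le_of_sq_le_sq ?_ (by positivity)
      nlinarith [hy.1, hyI.2]
    have h2 : (1 : ℝ) ≤ (3 * k) ^ k * (h / phiW y) ^ k := by
      rw [← mul_pow]; exact one_le_pow₀ h1
    have h3 : |∑ i ∈ Finset.range (k + 1), (k.choose i : ℝ) * (-1 : ℝ) ^ (k - i) *
        (S i).indicator (fun y => shiftKernel β y ((((i : ℝ) - k / 2) * h) / phiW y)) y| ≤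
        M * 2 ^ k := by
      refine (Finset.abs_sum_le_sum_abs _ _).trans ?_
      have : (2 : ℝ) ^ k = ∑ i ∈ Finset.range (k + 1), (k.choose i : ℝ) := by
        exact_mod_cast (Nat.sum_range_choose k).symm
      rw [this, Finset.mul_sum]
      refine Finset.sum_le_sum fun i hi => ?_
      rw [abs_mul, abs_mul, abs_pow, abs_neg, abs_one, one_pow, mul_one, Nat.abs_cast, mul_comm]
      refine mul_le_mul_of_nonneg_right ?_ (by positivity)
      by_cases hyi : y ∈ S i
      · rw [indicator_of_mem hyi, abs_of_nonneg (shiftKernel_nonneg β hyc _)]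
        exact hM y hyc _ (abs_shift_div_phiW_le_one hκ (ha i hi) ⟨by linarith [hy.1], hy.2⟩)
      · rw [indicator_of_notMem hyi, abs_zero]; exact hM0.le
    refine h3.trans ?_
    rw [mul_assoc (M * 2 ^ k)]
    exact le_mul_of_one_le_right (by positivity) h2

theorem rpow_neg_half_eq_phiW_pow {y : ℝ} (hy : y ∈ Ioo (-1 : ℝ) 1) (k : ℕ) :
    (1 - y ^ 2) ^ (-(k : ℝ) / 2) = (phiW y ^ k)⁻¹ := by
  have h0 := (phiW_pos hy).le
  rw [← phiW_sq (Ioo_subset_Icc_self hy), ← Real.rpow_natCast, ← Real.rpow_mul h0,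
    ← Real.rpow_natCast, ← Real.rpow_neg h0]
  congr 1
  push_cast; ring

theorem symmDelta_eq_zero_of_le {k : ℕ} {f : ℝ → ℝ} (hf : f ∈ MPlus k) {h x : ℝ} (hh : 0 ≤ h)
    (hx : -1 < x - k * h / 2) (hx' : x + k * h / 2 ≤ 0) : symmDelta k h f x = 0 := by
  unfold symmDelta
  split_ifs with hc
  · refine Finset.sum_eq_zero fun i hi => ?_
    have hi' : (i : ℝ) ≤ k := by exact_mod_cast Nat.lt_succ_iff.mp (Finset.mem_range.mp hi)
    have h1 : 0 ≤ (i : ℝ) * h := by positivity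
    have h2 := mul_le_mul_of_nonneg_right hi' hh
    rw [hf.2 _ (by linarith) (by linarith), mul_zero]
  · rfl

/-- The main part of the modulus at a single step `h`. -/
theorem exists_LpOn_symmDelta_le {k : ℕ} (hk : 1 ≤ k) (β : ℝ) :
    ∃ C > 0, ∀ f : ℝ → ℝ, f ∈ MPlus k ∩ WSet 1 β β → ∀ h : ℝ, 0 < h → k * h ≤ 1 / 2 →
      LpOn (fun x => jacobi β β x * symmDelta k (h * phiW x) f x) 1
        (-1 + 2 * (k : ℝ) ^ 2 * h ^ 2) (1 - 2 * (k : ℝ) ^ 2 * h ^ 2) ≤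
      ENNReal.ofReal C * (ENNReal.ofReal (h ^ k) *
        LpOn (fun y => (1 - y ^ 2) ^ (-(k : ℝ) / 2) * (jacobi β β y * f y)) 1
          0 (1 - (k * h) ^ 2)) := by
  obtain ⟨M, hM0, hM, hdiff⟩ := exists_shiftKernel_bounds k β
  have hk' : (1 : ℝ) ≤ k := by exact_mod_cast hk
  refine ⟨M * 2 ^ k * (3 * k) ^ k, by positivity, fun f ⟨hf, hfW⟩ h hh hkh => ?_⟩
  have hκ : 0 < k * h := by positivity
  have ha : ∀ i ∈ Finset.range (k + 1), |((i : ℝ) - k / 2) * h| ≤ k * h / 2 := by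
    intro i hi
    have hi' : (i : ℝ) ≤ k := by exact_mod_cast Nat.lt_succ_iff.mp (Finset.mem_range.mp hi)
    have : (0 : ℝ) ≤ i := by positivity
    rw [abs_mul, abs_of_pos hh]
    have : |(i : ℝ) - k / 2| ≤ k / 2 := abs_le.mpr ⟨by linarith, by linarith⟩
    nlinarith
  set I := Icc (-(1 / 4) : ℝ) (1 - 2 * (k * h) ^ 2)
  set T := Icc (-(1 / 2) : ℝ) (1 - (k * h) ^ 2) with hT
  set S : ℕ → Set ℝ := fun i => (fun x => x + (((i : ℝ) - k / 2) * h) * phiW x) '' I with hS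
  set c : ℕ → ℝ := fun i => (k.choose i : ℝ) * (-1 : ℝ) ^ (k - i) with hc
  set G : ℕ → ℝ → ℝ := fun i => (S i).indicator
    (fun y => shiftKernel β y ((((i : ℝ) - k / 2) * h) / phiW y) * (jacobi β β y * f y)) with hG
  have hcv := fun i hi => integrableOn_and_integral_shift hfW hκ hkh (ha i hi) hM
  have hsymm : ∀ x ∈ I, jacobi β β x * symmDelta k (h * phiW x) f x =
      ∑ i ∈ Finset.range (k + 1), c i * (jacobi β β x * f (x + (((i : ℝ) - k / 2) * h) * phiW x)) ∧
      0 ≤ jacobi β β x * symmDelta k (h * phiW x) f x := by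
    intro x hx
    have hxI := Icc_subset_Ioo_neg_one_one hκ hx
    have hl := shift_mem_Icc (a := -(k * h / 2)) hκ hkh
      (by rw [abs_neg, abs_of_pos (by positivity)]) hx
    have hr := shift_mem_Icc (a := k * h / 2) hκ hkh (by rw [abs_of_pos (by positivity)]) hx
    have hsq : 0 < (k * h) ^ 2 := by positivity
    have hcond : x - k * (h * phiW x) / 2 ∈ Icc (-1 : ℝ) 1 ∧
        x + k * (h * phiW x) / 2 ∈ Icc (-1 : ℝ) 1 :=
      ⟨⟨by linarith [hl.1], by linarith [hl.2]⟩, ⟨by linarith [hr.1], by linarith [hr.2]⟩⟩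
    have hval : symmDelta k (h * phiW x) f x = ∑ i ∈ Finset.range (k + 1), ((k.choose i : ℝ) *
        (-1 : ℝ) ^ (k - i) * f (x - k * (h * phiW x) / 2 + i * (h * phiW x))) := if_pos hcond
    constructor
    · rw [hval, Finset.mul_sum]
      refine Finset.sum_congr rfl fun i _ => ?_
      rw [show x - k * (h * phiW x) / 2 + i * (h * phiW x) =
        x + (((i : ℝ) - k / 2) * h) * phiW x by ring]
      simp only [hc]; ring
    · refine mul_nonneg (jacobi_nonneg β β (Ioo_subset_Icc_self hxI)) ?_
      rw [hval]
      have := phiW_pos hxI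
      exact hf.1.sum_choose_nonneg (by positivity) (by linarith [hl.1]) (by linarith [hr.2])
  have hintg : IntegrableOn (fun x => jacobi β β x * symmDelta k (h * phiW x) f x) I := by
    refine (integrableOn_congr_fun (fun x hx => (hsymm x hx).1) measurableSet_Icc).mpr ?_
    exact integrable_finsetSum _ fun i hi => ((hcv i hi).1).const_mul (c i)
  have hval : ∫ x in I, jacobi β β x * symmDelta k (h * phiW x) f x =
      ∫ y in T, ∑ i ∈ Finset.range (k + 1), c i * G i y := by
    rw [setIntegral_congr_fun measurableSet_Icc (fun x hx => (hsymm x hx).1),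
      integral_finsetSum _ fun i hi => ((hcv i hi).1).const_mul (c i),
      integral_finsetSum _ fun i hi => ((hcv i hi).2.1).const_mul (c i)]
    refine Finset.sum_congr rfl fun i hi => ?_
    rw [integral_const_mul, integral_const_mul, (hcv i hi).2.2]
  have hpt : ∀ y ∈ Icc (0 : ℝ) (1 - (k * h) ^ 2), ‖∑ i ∈ Finset.range (k + 1), c i * G i y‖ₑ ≤
      ENNReal.ofReal (M * 2 ^ k * (3 * k) ^ k) * (ENNReal.ofReal (h ^ k) *
        ‖(1 - y ^ 2) ^ (-(k : ℝ) / 2) * (jacobi β β y * f y)‖ₑ) := by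
    intro y hy
    have hyI : y ∈ Ioo (-1 : ℝ) 1 := ⟨by linarith [hy.1], by nlinarith [hy.2]⟩
    have hφ := phiW_pos hyI
    have hfac : ∑ i ∈ Finset.range (k + 1), c i * G i y =
        (∑ i ∈ Finset.range (k + 1), (k.choose i : ℝ) * (-1 : ℝ) ^ (k - i) *
          (S i).indicator (fun y => shiftKernel β y ((((i : ℝ) - k / 2) * h) / phiW y)) y) *
          (jacobi β β y * f y) := by
      rw [Finset.sum_mul]
      refine Finset.sum_congr rfl fun i _ => ?_
      by_cases hyi : y ∈ S i
      · simp only [hG, hc, indicator_of_mem hyi]; ring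
      · simp only [hG, indicator_of_notMem hyi]; ring
    rw [← ofReal_norm, ← ofReal_norm, ← ENNReal.ofReal_mul (by positivity),
      ← ENNReal.ofReal_mul (by positivity)]
    refine ENNReal.ofReal_le_ofReal ?_
    rw [hfac, norm_mul, rpow_neg_half_eq_phiW_pow hyI, norm_mul (phiW y ^ k)⁻¹, Real.norm_eq_abs (∑ _ ∈ _, _),
      Real.norm_of_nonneg (by positivity : 0 ≤ (phiW y ^ k)⁻¹)]
    refine (mul_le_mul_of_nonneg_right
      (abs_sum_choose_indicator_le hk hM0 hM hdiff hh hkh (fun i => rfl) hy)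
      (norm_nonneg _)).trans_eq ?_
    rw [div_pow]
    ring
  have hzero : ∀ y ∈ Icc (-(1 / 2) : ℝ) 0, ‖∑ i ∈ Finset.range (k + 1), c i * G i y‖ₑ = 0 := by
    intro y hy
    have hfy := hf.2 y (by linarith [hy.1]) hy.2
    rw [Finset.sum_eq_zero, enorm_zero]
    intro i _
    by_cases hyi : y ∈ S i
    · simp only [hG, indicator_of_mem hyi, hfy, mul_zero]
    · simp only [hG, indicator_of_notMem hyi, mul_zero]
  rw [lintegral_enorm_eq_LpOn, lintegral_enorm_eq_LpOn]
  have hsub : Icc (-1 + 2 * (k : ℝ) ^ 2 * h ^ 2) (1 - 2 * (k : ℝ) ^ 2 * h ^ 2) ⊆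
      Ico (-1 + 2 * (k : ℝ) ^ 2 * h ^ 2) (-(1 / 4)) ∪ I := by
    intro x hx
    rcases lt_or_ge x (-(1 / 4)) with hlt | hge
    · exact Or.inl ⟨hx.1, hlt⟩
    · exact Or.inr ⟨hge, by rw [mul_pow]; linarith [hx.2]⟩
  have hleft : ∫⁻ x in Ico (-1 + 2 * (k : ℝ) ^ 2 * h ^ 2) (-(1 / 4)),
      ‖jacobi β β x * symmDelta k (h * phiW x) f x‖ₑ = 0 := by
    rw [← lintegral_zero (μ := volume.restrict (Ico (-1 + 2 * (k : ℝ) ^ 2 * h ^ 2) (-(1 / 4))))]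
    refine setLIntegral_congr_fun measurableSet_Ico fun x hx => ?_
    have hsq : 0 < (k * h) ^ 2 := by positivity
    have hxI : x ∈ Ioo (-1 : ℝ) 1 := ⟨by nlinarith [hx.1], by linarith [hx.2]⟩
    have hφ := phiW_pos hxI
    have hle := phiW_le_one x
    have hx1 := hx.1
    have h1 : k * h * phiW x ≤ 1 + x := by
      refine le_of_sq_le_sq ?_ (by linarith [hxI.1])
      rw [mul_pow, phiW_sq (Ioo_subset_Icc_self hxI)]
      have h2 : (k * h) ^ 2 ≤ (1 + x) / 2 := by rw [mul_pow]; linarith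
      have h3 : 1 - x ^ 2 ≤ 2 * (1 + x) := by nlinarith [sq_nonneg (1 + x)]
      have h4 : 0 ≤ 1 - x ^ 2 := by nlinarith [hxI.1, hxI.2]
      have h5 : 0 ≤ 1 + x := by linarith [hxI.1]
      calc (k * h) ^ 2 * (1 - x ^ 2) ≤ (1 + x) / 2 * (2 * (1 + x)) := by gcongr
        _ = (1 + x) ^ 2 := by ring
    have h2 : k * h * phiW x ≤ 1 / 2 := by nlinarith
    rw [symmDelta_eq_zero_of_le hf (by positivity) (by linarith [hxI.1]) (by linarith [hx.2]),
      mul_zero, enorm_zero]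
  have hTsub : T ⊆ Icc (-(1 / 2) : ℝ) 0 ∪ Icc 0 (1 - (k * h) ^ 2) := by
    intro y hy
    rcases le_total y 0 with hle | hge
    · exact Or.inl ⟨hy.1, hle⟩
    · exact Or.inr ⟨hge, hy.2⟩
  calc ∫⁻ x in Icc (-1 + 2 * (k : ℝ) ^ 2 * h ^ 2) (1 - 2 * (k : ℝ) ^ 2 * h ^ 2),
        ‖jacobi β β x * symmDelta k (h * phiW x) f x‖ₑ
      ≤ ∫⁻ x in I, ‖jacobi β β x * symmDelta k (h * phiW x) f x‖ₑ := by
        refine (lintegral_mono_set hsub).trans ((lintegral_union_le _ _ _).trans ?_)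
        rw [hleft, zero_add]
    _ = ENNReal.ofReal (∫ x in I, jacobi β β x * symmDelta k (h * phiW x) f x) := by
        rw [ofReal_integral_eq_lintegral_ofReal hintg]
        · exact setLIntegral_congr_fun measurableSet_Icc fun x hx => by
            rw [← ofReal_norm, Real.norm_of_nonneg (hsymm x hx).2]
        · exact (ae_restrict_iff' measurableSet_Icc).mpr
            (Eventually.of_forall fun x hx => (hsymm x hx).2)
    _ ≤ ∫⁻ y in T, ‖∑ i ∈ Finset.range (k + 1), c i * G i y‖ₑ := by
        rw [hval]
        refine le_trans ?_ (enorm_integral_le_lintegral_enorm _)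
        rw [← ofReal_norm]
        exact ENNReal.ofReal_le_ofReal (le_abs_self _)
    _ ≤ ∫⁻ y in Icc (0 : ℝ) (1 - (k * h) ^ 2), ‖∑ i ∈ Finset.range (k + 1), c i * G i y‖ₑ := by
        refine (lintegral_mono_set hTsub).trans ((lintegral_union_le _ _ _).trans ?_)
        rw [setLIntegral_congr_fun measurableSet_Icc hzero, lintegral_zero, zero_add]
    _ ≤ ∫⁻ y in Icc (0 : ℝ) (1 - (k * h) ^ 2), ENNReal.ofReal (M * 2 ^ k * (3 * k) ^ k) *
          (ENNReal.ofReal (h ^ k) *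
            ‖(1 - y ^ 2) ^ (-(k : ℝ) / 2) * (jacobi β β y * f y)‖ₑ) :=
        setLIntegral_mono' measurableSet_Icc hpt
    _ = _ := by
        rw [lintegral_const_mul' _ _ ENNReal.ofReal_ne_top,
          lintegral_const_mul' _ _ ENNReal.ofReal_ne_top]

theorem exists_OmegaMain_le {k : ℕ} (hk : 1 ≤ k) (β : ℝ) :
    ∃ C > 0, ∀ f : ℝ → ℝ, f ∈ MPlus k ∩ WSet 1 β β → ∀ δ : ℝ, δ ≤ 1 / (2 * (k : ℝ)) →
      OmegaMain k f δ (jacobi β β) 1 ≤ ENNReal.ofReal C * innerTerm k β f δ := by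
  obtain ⟨C, hC, hmain⟩ := exists_LpOn_symmDelta_le hk β
  have hk' : (1 : ℝ) ≤ k := by exact_mod_cast hk
  refine ⟨C * 2 ^ k, by positivity, fun f hf δ hδ => iSup₂_le fun h hh => ?_⟩
  have hkh : k * h ≤ 1 / 2 := by
    have := hh.2.trans hδ
    rw [le_div_iff₀ (by positivity)] at this
    linarith
  refine (hmain f hf h hh.1 hkh).trans ?_
  rw [ENNReal.ofReal_mul hC.le, mul_assoc]
  refine mul_le_mul_right ?_ _
  have hle : ENNReal.ofReal ((h / 2) ^ k) *
      LpOn (fun y => (1 - y ^ 2) ^ (-(k : ℝ) / 2) * (jacobi β β y * f y)) 1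
        0 (1 - 2 * (k : ℝ) ^ 2 * (h / 2) ^ 2) ≤ innerTerm k β f δ :=
    le_iSup₂_of_le (h / 2) ⟨by linarith [hh.1], by linarith [hh.1, hh.2]⟩ le_rfl
  refine le_trans ?_ (mul_le_mul_right hle _)
  rw [← mul_assoc, ← ENNReal.ofReal_mul (by positivity), ← mul_pow, mul_div_cancel₀ h two_ne_zero]
  refine mul_le_mul_right ?_ _
  rw [lintegral_enorm_eq_LpOn, lintegral_enorm_eq_LpOn]
  refine lintegral_mono_set (Icc_subset_Icc le_rfl ?_)
  nlinarith [sq_nonneg (k * h)]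

theorem abs_symmDelta_le_of_mem_MPlus {k : ℕ} (hk : 1 ≤ k) {f : ℝ → ℝ} (hf : f ∈ MPlus k) {h z : ℝ}
    (hh : 0 < h) (hz : z + k * h / 2 ∈ Ioo (-1 : ℝ) 1) (hz' : z - k * h / 2 ≠ -1) :
    |symmDelta k h f z| ≤ 2 ^ k * f (z + k * h / 2) := by
  unfold symmDelta
  split_ifs with hc
  · have hlt : -1 < z - k * h / 2 := lt_of_le_of_ne hc.1.1 hz'.symm
    have e : z - k * h / 2 + k * h = z + k * h / 2 := by ring
    have := abs_sum_choose_le_of_mem_MPlus hk hf hh hlt (by rw [e]; exact hz.2)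
    rwa [e] at this
  · rw [abs_zero]
    exact mul_nonneg (by positivity) (nonneg_of_mem_MPlus hk hf hz.1 hz.2)

theorem enorm_le_ofReal_mul_enorm {u v C : ℝ} (hC : 0 ≤ C) (h : |u| ≤ C * |v|) :
    ‖u‖ₑ ≤ ENNReal.ofReal C * ‖v‖ₑ := by
  rw [← ofReal_norm, ← ofReal_norm, ← ENNReal.ofReal_mul hC]
  exact ENNReal.ofReal_le_ofReal h

theorem ae_volume_ne (a : ℝ) : ∀ᵐ x : ℝ, x ≠ a := by
  simp [ae_iff]

theorem setLIntegral_enorm_le_endTerm (k : ℕ) (β : ℝ) (f : ℝ → ℝ) (δ : ℝ) :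
    ∫⁻ x in Icc (1 - 2 * (k : ℝ) ^ 2 * δ ^ 2) 1, ‖jacobi β β x * f x‖ₑ ≤ endTerm k β f δ := by
  rw [endTerm, lintegral_enorm_eq_LpOn]
  exact lintegral_mono_set (Icc_subset_Icc (by nlinarith [sq_nonneg (k * δ)]) le_rfl)

theorem OmegaBwd_le {k : ℕ} (hk : 1 ≤ k) (β : ℝ) {f : ℝ → ℝ} (hf : f ∈ MPlus k) {δ : ℝ}
    (hL : 2 * (k : ℝ) ^ 2 * δ ^ 2 ≤ 1 / 2) :
    OmegaBwd k f δ (jacobi β β) 1 ≤ ENNReal.ofReal (2 ^ k) * endTerm k β f δ := by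
  refine iSup₂_le fun h hh => ?_
  refine le_trans ?_ (mul_le_mul_right (setLIntegral_enorm_le_endTerm k β f δ) _)
  rw [lintegral_enorm_eq_LpOn, ← lintegral_const_mul' _ _ ENNReal.ofReal_ne_top]
  refine lintegral_mono_ae ((ae_restrict_iff' measurableSet_Icc).mpr ?_)
  filter_upwards [ae_volume_ne 1, ae_volume_ne (k * h - 1)] with x hx1 hx2 hx
  have hxI : x ∈ Ioo (-1 : ℝ) 1 := ⟨by linarith [hx.1], lt_of_le_of_ne hx.2 hx1⟩
  have e : x - k * h / 2 + k * h / 2 = x := by ring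
  have hΔ := abs_symmDelta_le_of_mem_MPlus hk hf (z := x - k * h / 2) hh.1 (by rwa [e])
    (fun h' => hx2 (by linarith))
  rw [e] at hΔ
  refine enorm_le_ofReal_mul_enorm (by positivity) ?_
  rw [abs_mul, abs_mul, abs_of_nonneg (nonneg_of_mem_MPlus hk hf hxI.1 hxI.2)]
  have := mul_le_mul_of_nonneg_left hΔ (abs_nonneg (jacobi β β x))
  linarith

theorem jacobi_neg (β x : ℝ) : jacobi β β (-x) = jacobi β β x := by
  unfold jacobi
  rw [sub_neg_eq_add, ← sub_eq_add_neg, mul_comm]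

theorem jacobi_le_mul_jacobi {β : ℝ} (hβ : β ≤ 0) {x z : ℝ} (hx : -1 < x) (hx' : x ≤ 0) (hz : 0 ≤ z)
    (hz1 : z < 1) (hxz : 1 - z ≤ 1 + x) : jacobi β β x ≤ 2 ^ (-β) * jacobi β β z := by
  have h1 : (1 - x) ^ β ≤ 1 := Real.rpow_le_one_of_one_le_of_nonpos (by linarith) hβ
  have h2 : (1 + x) ^ β ≤ (1 - z) ^ β := Real.rpow_le_rpow_of_nonpos (by linarith) hxz hβ
  have h3 : (2 : ℝ) ^ β ≤ (1 + z) ^ β :=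
    Real.rpow_le_rpow_of_nonpos (by linarith) (by linarith) hβ
  have h4 : (2 : ℝ) ^ (-β) * 2 ^ β = 1 := by
    rw [← Real.rpow_add two_pos, neg_add_cancel, Real.rpow_zero]
  have h5 : 0 ≤ (1 - z) ^ β := Real.rpow_nonneg (by linarith) _
  have h6 : 0 ≤ (1 + x) ^ β := Real.rpow_nonneg (by linarith) _
  unfold jacobi
  calc (1 + x) ^ β * (1 - x) ^ β ≤ (1 + x) ^ β * 1 := by gcongr
    _ ≤ (2 ^ (-β) * 2 ^ β) * (1 - z) ^ β := by rw [h4, mul_one, one_mul]; exact h2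
    _ ≤ (2 ^ (-β) * (1 + z) ^ β) * (1 - z) ^ β := by gcongr
    _ = _ := by ring

theorem setLIntegral_comp_neg_Icc (g : ℝ → ℝ≥0∞) (a b : ℝ) :
    ∫⁻ x in Icc a b, g (-x) = ∫⁻ x in Icc (-b) (-a), g x := by
  rw [← (Measure.measurePreserving_neg (volume : Measure ℝ)).setLIntegral_comp_preimage_emb
    (MeasurableEquiv.neg ℝ).measurableEmbedding g]
  congr 2
  ext x; simp only [mem_preimage, mem_Icc]
  constructor <;> rintro ⟨h1, h2⟩ <;> constructor <;> linarith

theorem setLIntegral_comp_add_Icc (g : ℝ → ℝ≥0∞) (a b c : ℝ) :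
    ∫⁻ x in Icc a b, g (x + c) = ∫⁻ x in Icc (a + c) (b + c), g x := by
  rw [← (measurePreserving_add_right (volume : Measure ℝ) c).setLIntegral_comp_preimage_emb
    (measurableEmbedding_addRight c) g]
  congr 2
  ext x; simp

theorem symmDelta_add_eq_zero {k : ℕ} {f : ℝ → ℝ} {h x : ℝ} (hx : 1 < x + k * h) :
    symmDelta k h f (x + k * h / 2) = 0 :=
  if_neg fun hc => by linarith [hc.2.2]

/-- For `β ≤ 0` the forward part is controlled by reflecting the left end onto the right one. -/
theorem OmegaFwd_le_of_nonpos {k : ℕ} (hk : 1 ≤ k) {β : ℝ} (hβ : β ≤ 0) {f : ℝ → ℝ}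
    (hf : f ∈ MPlus k) {δ : ℝ} (hL : 2 * (k : ℝ) ^ 2 * δ ^ 2 ≤ 1 / 2) :
    OmegaFwd k f δ (jacobi β β) 1 ≤ ENNReal.ofReal (2 ^ k + 2 ^ k * 2 ^ (-β)) * endTerm k β f δ := by
  refine iSup₂_le fun h hh => ?_
  rw [lintegral_enorm_eq_LpOn]
  have hend := setLIntegral_enorm_le_endTerm k β f δ
  obtain ⟨hh0, hhL⟩ := hh
  set L := 2 * (k : ℝ) ^ 2 * δ ^ 2 with hLdef
  have hkh : 0 < k * h := by positivity
  set Lm := min L (2 - k * h) with hLm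
  have hLm1 : Lm ≤ L := min_le_left _ _
  have hLm2 : Lm ≤ 2 - k * h := min_le_right _ _
  set u : ℝ → ℝ≥0∞ := fun x => ‖jacobi β β x * symmDelta k h f (x + k * h / 2)‖ₑ with hu
  have hΔ : ∀ x, -1 < x → x + k * h < 1 →
      |symmDelta k h f (x + k * h / 2)| ≤ 2 ^ k * f (x + k * h) := by
    intro x hx hx'
    have e : x + k * h / 2 + k * h / 2 = x + k * h := by ring
    have := abs_symmDelta_le_of_mem_MPlus hk hf (z := x + k * h / 2) hh0
      (by rw [e]; exact ⟨by linarith, hx'⟩) (fun h' => by linarith)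
    rwa [e] at this
  have hpos : ∀ x, -1 < x → x < 1 → 0 ≤ jacobi β β x := fun x hx hx' =>
    jacobi_nonneg β β ⟨hx.le, hx'.le⟩
  have hzero : ∀ x, 1 < x + k * h → u x = 0 := by
    intro x hx
    simp only [hu]
    rw [symmDelta_add_eq_zero hx, mul_zero, enorm_zero]
  have hA : ∫⁻ x in Icc (-1) (-1 + Lm / 2), u x ≤
      ENNReal.ofReal (2 ^ k) * ∫⁻ x in Icc (1 - L) 1, ‖jacobi β β x * f x‖ₑ := by
    have e := setLIntegral_comp_neg_Icc (fun x => ‖jacobi β β x * f x‖ₑ) (-1) (-(1 - L))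
    rw [neg_neg, neg_neg] at e
    rw [← e, ← lintegral_const_mul' _ _ ENNReal.ofReal_ne_top]
    have hsub : Icc (-1) (-1 + Lm / 2) ⊆ Icc (-1) (-(1 - L)) := by
      intro x hx
      have := hx.1.trans hx.2
      exact ⟨hx.1, by linarith [hx.2]⟩
    refine le_trans ?_ (lintegral_mono_set hsub)
    refine lintegral_mono_ae ((ae_restrict_iff' measurableSet_Icc).mpr ?_)
    filter_upwards [ae_volume_ne (-1)] with x hx1 hx
    have hx0 : -1 < x := lt_of_le_of_ne hx.1 hx1.symm
    have hx2 := hx.2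
    have hle : x + k * h ≤ -x := by linarith
    have h1 := hΔ x hx0 (by linarith)
    have h2 := monotone_of_mem_MPlus hk hf (by linarith : -1 < x + k * h) hle (by linarith)
    have h3 := nonneg_of_mem_MPlus hk hf (by linarith : -1 < -x) (by linarith)
    refine enorm_le_ofReal_mul_enorm (by positivity) ?_
    rw [abs_mul, abs_mul, jacobi_neg, abs_of_nonneg h3]
    have h4 := mul_le_mul_of_nonneg_left h2 (by positivity : (0 : ℝ) ≤ 2 ^ k)
    have := mul_le_mul_of_nonneg_left (h1.trans h4) (abs_nonneg (jacobi β β x))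
    linarith
  have hB : 0 < Lm → ∫⁻ x in Icc (-1 + Lm / 2) (-1 + Lm), u x ≤
      ENNReal.ofReal (2 ^ k * 2 ^ (-β)) * ∫⁻ x in Icc (1 - L) 1, ‖jacobi β β x * f x‖ₑ := by
    intro hLm0
    have e := setLIntegral_comp_add_Icc (fun x => ‖jacobi β β x * f x‖ₑ) (-1 + Lm / 2) (-1 + Lm)
      (2 - Lm)
    have hsub : Icc (-1 + Lm / 2 + (2 - Lm)) (-1 + Lm + (2 - Lm)) ⊆ Icc (1 - L) 1 :=
      Icc_subset_Icc (by linarith) (by linarith)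
    refine le_trans ?_ (mul_le_mul_right (lintegral_mono_set hsub) _)
    rw [← e, ← lintegral_const_mul' _ _ ENNReal.ofReal_ne_top]
    refine lintegral_mono_ae ((ae_restrict_iff' measurableSet_Icc).mpr ?_)
    filter_upwards [ae_volume_ne (-1 + Lm)] with x hx1 hx
    have hx0 : x < -1 + Lm := lt_of_le_of_ne hx.2 hx1
    have hx2 := hx.1
    have h1 := hΔ x (by linarith) (by linarith)
    have h2 := monotone_of_mem_MPlus hk hf (by linarith : -1 < x + k * h)
      (by linarith : x + k * h ≤ x + (2 - Lm)) (by linarith)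
    have h3 := nonneg_of_mem_MPlus hk hf (by linarith : -1 < x + (2 - Lm)) (by linarith)
    have h5 := jacobi_le_mul_jacobi hβ (by linarith : -1 < x) (by linarith)
      (by linarith : 0 ≤ x + (2 - Lm)) (by linarith) (by linarith)
    refine enorm_le_ofReal_mul_enorm (by positivity) ?_
    rw [abs_mul, abs_mul, abs_of_nonneg h3, abs_of_nonneg (hpos x (by linarith) (by linarith)),
      abs_of_nonneg (hpos (x + (2 - Lm)) (by linarith) (by linarith))]
    have h4 := mul_le_mul_of_nonneg_left h2 (by positivity : (0 : ℝ) ≤ 2 ^ k)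
    have h6 := hpos (x + (2 - Lm)) (by linarith) (by linarith)
    calc jacobi β β x * |symmDelta k h f (x + k * h / 2)|
        ≤ (2 ^ (-β) * jacobi β β (x + (2 - Lm))) * (2 ^ k * f (x + (2 - Lm))) := by
          refine mul_le_mul h5 (h1.trans h4) (abs_nonneg _) (by positivity)
      _ = _ := by ring
  have hC : ∫⁻ x in Icc (-1 + Lm) (-1 + L), u x = 0 := by
    rw [← lintegral_zero (μ := volume.restrict (Icc (-1 + Lm) (-1 + L)))]
    refine lintegral_congr_ae ((ae_restrict_iff' measurableSet_Icc).mpr ?_)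
    filter_upwards [ae_volume_ne (-1 + Lm), ae_volume_ne (-1 + L)] with x hx1 hx2 hx
    have h1 : -1 + Lm < x := lt_of_le_of_ne hx.1 hx1.symm
    have h2 : x < -1 + L := lt_of_le_of_ne hx.2 hx2
    have h3 : Lm = 2 - k * h := by
      rcases min_choice L (2 - k * h) with h | h
      · rw [← hLm] at h; linarith
      · exact h
    exact hzero x (by linarith)
  rcases le_or_gt Lm 0 with hneg | hLm0
  · have : ∫⁻ x in Icc (-1) (-1 + L), u x = 0 :=
      le_antisymm ((lintegral_mono_set (Icc_subset_Icc (by linarith) le_rfl)).trans hC.le) (zero_le)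
    rw [this]; exact zero_le
  have hsub : Icc (-1) (-1 + L) ⊆
      (Icc (-1) (-1 + Lm / 2) ∪ Icc (-1 + Lm / 2) (-1 + Lm)) ∪ Icc (-1 + Lm) (-1 + L) := by
    rw [Icc_union_Icc_eq_Icc (by linarith) (by linarith),
      Icc_union_Icc_eq_Icc (by linarith) (by linarith)]
  calc ∫⁻ x in Icc (-1) (-1 + L), u x
      ≤ ((∫⁻ x in Icc (-1) (-1 + Lm / 2), u x) + ∫⁻ x in Icc (-1 + Lm / 2) (-1 + Lm), u x) +
          ∫⁻ x in Icc (-1 + Lm) (-1 + L), u x :=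
        (lintegral_mono_set hsub).trans ((lintegral_union_le _ _ _).trans
          (add_le_add_left (lintegral_union_le _ _ _) _))
    _ ≤ (ENNReal.ofReal (2 ^ k) * endTerm k β f δ +
          ENNReal.ofReal (2 ^ k * 2 ^ (-β)) * endTerm k β f δ) + 0 := by
        gcongr
        · exact hA.trans (mul_le_mul_right hend _)
        · exact (hB hLm0).trans (mul_le_mul_right hend _)
        · exact hC.le
    _ = _ := by
        rw [add_zero, ← add_mul, ← ENNReal.ofReal_add (by positivity) (by positivity)]

theorem ofReal_apply_half_le_endTerm {k : ℕ} (hk : 1 ≤ k) {β : ℝ} (hβ : 0 ≤ β) {f : ℝ → ℝ}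
    (hf : f ∈ MPlus k) {δ : ℝ} (hδ : 1 ≤ ((k : ℝ) + 1) * (2 * (k : ℝ) ^ 2 * δ ^ 2)) :
    ENNReal.ofReal ((1 / (2 * ((k : ℝ) + 1))) ^ (β + 1) * f (1 / 2)) ≤ endTerm k β f δ := by
  have hk' : (1 : ℝ) ≤ k := by exact_mod_cast hk
  set r : ℝ := 1 / (2 * ((k : ℝ) + 1)) with hr
  have hr0 : 0 < r := by positivity
  have hr4 : r ≤ 1 / 4 := one_div_le_one_div_of_le (by norm_num) (by linarith)
  have hrk : ((k : ℝ) + 1) * r = 1 / 2 := by rw [hr]; field_simp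
  have hr3 : 2 * r ≤ 3 * (k : ℝ) ^ 2 * δ ^ 2 := by
    have : 0 < (k : ℝ) + 1 := by positivity
    by_contra! hcon
    nlinarith
  have hf0 := nonneg_of_mem_MPlus hk hf (by norm_num : (-1 : ℝ) < 1 / 2) (by norm_num)
  rw [endTerm, lintegral_enorm_eq_LpOn]
  have hsub : Icc (1 - 2 * r) (1 - r) ⊆ Icc (1 - 3 * (k : ℝ) ^ 2 * δ ^ 2) 1 :=
    Icc_subset_Icc (by linarith) (by linarith)
  refine le_trans ?_ (lintegral_mono_set hsub)
  calc ENNReal.ofReal (r ^ (β + 1) * f (1 / 2))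
      = ∫⁻ _ in Icc (1 - 2 * r) (1 - r), ENNReal.ofReal (r ^ β * f (1 / 2)) := by
        rw [setLIntegral_const, Real.volume_Icc, ← ENNReal.ofReal_mul (by positivity),
          Real.rpow_add hr0, Real.rpow_one]
        congr 1; ring
    _ ≤ _ := by
        refine setLIntegral_mono' measurableSet_Icc fun y hy => ?_
        rw [← ofReal_norm]
        refine ENNReal.ofReal_le_ofReal ((le_abs_self _).trans' ?_)
        have h1 : f (1 / 2) ≤ f y := monotone_of_mem_MPlus hk hf (by norm_num)
          (by linarith [hy.1]) (by linarith [hy.2])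
        have h2 : r ^ β ≤ (1 - y) ^ β := Real.rpow_le_rpow hr0.le (by linarith [hy.2]) hβ
        have h3 : 1 ≤ (1 + y) ^ β := Real.one_le_rpow (by linarith [hy.1]) hβ
        have h4 : 0 ≤ r ^ β := by positivity
        have h5 : r ^ β ≤ jacobi β β y := by
          unfold jacobi
          calc r ^ β = 1 * r ^ β := (one_mul _).symm
            _ ≤ _ := mul_le_mul h3 h2 h4 (by linarith)
        exact mul_le_mul h5 h1 hf0 (h4.trans h5)

theorem OmegaFwd_le_of_nonneg {k : ℕ} (hk : 1 ≤ k) {β : ℝ} (hβ : 0 ≤ β) {f : ℝ → ℝ}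
    (hf : f ∈ MPlus k) {δ : ℝ} (hL : 2 * (k : ℝ) ^ 2 * δ ^ 2 ≤ 1 / 2)
    (hδ : ((k : ℝ) + 1) * (2 * (k : ℝ) ^ 2 * δ ^ 2) ≤ 3 / 2) :
    OmegaFwd k f δ (jacobi β β) 1 ≤
      ENNReal.ofReal (2 ^ k * ((1 / (2 * ((k : ℝ) + 1))) ^ (β + 1))⁻¹) * endTerm k β f δ := by
  refine iSup₂_le fun h hh => ?_
  rw [lintegral_enorm_eq_LpOn]
  obtain ⟨hh0, hhL⟩ := hh
  have hhk := mul_le_mul_of_nonneg_left hhL (Nat.cast_nonneg (α := ℝ) k)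
  have hkh : 0 < k * h := by positivity
  rcases le_or_gt (((k : ℝ) + 1) * (2 * (k : ℝ) ^ 2 * δ ^ 2)) 1 with hsmall | hlarge
  · refine le_trans (le_of_eq ?_) (zero_le)
    rw [← lintegral_zero (μ := volume.restrict (Icc (-1) (-1 + 2 * (k : ℝ) ^ 2 * δ ^ 2)))]
    refine lintegral_congr_ae ((ae_restrict_iff' measurableSet_Icc).mpr ?_)
    filter_upwards [ae_volume_ne (-1)] with x hx1 hx
    have hx0 : -1 < x := lt_of_le_of_ne hx.1 hx1.symm
    rw [symmDelta_eq_zero_of_le hf hh0.le (by linarith) (by linarith [hx.2]), mul_zero, enorm_zero]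
  · set q : ℝ := (1 / (2 * ((k : ℝ) + 1))) ^ (β + 1) with hq
    have hq0 : 0 < q := by positivity
    have hf0 := nonneg_of_mem_MPlus hk hf (by norm_num : (-1 : ℝ) < 1 / 2) (by norm_num)
    refine le_trans ?_ (mul_le_mul_right (ofReal_apply_half_le_endTerm hk hβ hf hlarge.le) _)
    rw [← hq, ← ENNReal.ofReal_mul (by positivity),
      show 2 ^ k * q⁻¹ * (q * f (1 / 2)) = 2 ^ k * f (1 / 2) by field_simp]
    calc ∫⁻ x in Icc (-1) (-1 + 2 * (k : ℝ) ^ 2 * δ ^ 2),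
          ‖jacobi β β x * symmDelta k h f (x + k * h / 2)‖ₑ
        ≤ ∫⁻ _ in Icc (-1) (-1 + 2 * (k : ℝ) ^ 2 * δ ^ 2), ENNReal.ofReal (2 ^ k * f (1 / 2)) := by
          refine lintegral_mono_ae ((ae_restrict_iff' measurableSet_Icc).mpr ?_)
          filter_upwards [ae_volume_ne (-1)] with x hx1 hx
          have hx0 : -1 < x := lt_of_le_of_ne hx.1 hx1.symm
          have hx2 := hx.2
          have hle : x + k * h ≤ 1 / 2 := by linarith
          have e : x + k * h / 2 + k * h / 2 = x + k * h := by ring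
          have hΔ := abs_symmDelta_le_of_mem_MPlus hk hf (z := x + k * h / 2) hh0
            (by rw [e]; exact ⟨by linarith, by linarith⟩) (fun h' => by linarith)
          rw [e] at hΔ
          have hmono := monotone_of_mem_MPlus hk hf (by linarith : -1 < x + k * h) hle (by norm_num)
          have hxc : x ∈ Icc (-1 : ℝ) 1 := ⟨hx0.le, by linarith⟩
          have hw : jacobi β β x ≤ 1 := by
            rw [jacobi_eq_phiW_rpow β hxc]
            exact Real.rpow_le_one (Real.sqrt_nonneg _) (phiW_le_one x) (by linarith)
          rw [← ofReal_norm, norm_mul, Real.norm_of_nonneg (jacobi_nonneg β β hxc)]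
          refine ENNReal.ofReal_le_ofReal ?_
          calc jacobi β β x * ‖symmDelta k h f (x + k * h / 2)‖
              ≤ 1 * ‖symmDelta k h f (x + k * h / 2)‖ := by gcongr
            _ ≤ 2 ^ k * f (x + k * h) := by rw [one_mul]; exact hΔ
            _ ≤ _ := by gcongr
      _ ≤ ENNReal.ofReal (2 ^ k * f (1 / 2)) * 1 := by
          rw [setLIntegral_const]
          refine mul_le_mul_right ?_ _
          rw [Real.volume_Icc, ← ENNReal.ofReal_one]
          exact ENNReal.ofReal_le_ofReal (by linarith)
      _ = _ := mul_one _

theorem exists_OmegaFwd_le {k : ℕ} (hk : 1 ≤ k) (β : ℝ) :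
    ∃ C > 0, ∀ f ∈ MPlus k, ∀ δ : ℝ, 2 * (k : ℝ) ^ 2 * δ ^ 2 ≤ 1 / 2 →
      (k ≤ 2 ∨ β ≤ 0 ∨ ((k : ℝ) + 1) * (2 * (k : ℝ) ^ 2 * δ ^ 2) ≤ 3 / 2) →
      OmegaFwd k f δ (jacobi β β) 1 ≤ ENNReal.ofReal C * endTerm k β f δ := by
  rcases le_or_gt β 0 with hβ | hβ
  · exact ⟨_, by positivity, fun f hf δ hL _ => OmegaFwd_le_of_nonpos hk hβ hf hL⟩
  · refine ⟨_, by positivity, fun f hf δ hL hcases => OmegaFwd_le_of_nonneg hk hβ.le hf hL ?_⟩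
    rcases hcases with h2 | h | h
    · have h2' : (k : ℝ) ≤ 2 := by exact_mod_cast h2
      have : 0 ≤ 2 * (k : ℝ) ^ 2 * δ ^ 2 := by positivity
      nlinarith
    · linarith
    · exact h

theorem statement11 (k : ℕ) (hk : 1 ≤ k) (β : ℝ) :
    ∃ c > (0 : ℝ), ∀ f : ℝ → ℝ, f ∈ MPlus k ∩ WSet 1 β β →
      ∀ δ : ℝ, 0 < δ → δ ≤ 1 / (2 * (k : ℝ)) →
        (OmegaMain k f δ (jacobi β β) 1 + OmegaBwd k f δ (jacobi β β) 1 ≤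
          ENNReal.ofReal c * endTerm k β f δ + ENNReal.ofReal c * innerTerm k β f δ) ∧
        (k ≤ 2 ∨ β ≤ 0 ∨ ((k : ℝ) + 1) * (2 * (k : ℝ) ^ 2 * δ ^ 2) ≤ 3 / 2 →
          omegaDT k f δ (jacobi β β) 1 ≤
            ENNReal.ofReal c * endTerm k β f δ + ENNReal.ofReal c * innerTerm k β f δ) := by
  obtain ⟨C₁, hC₁, hmain⟩ := exists_OmegaMain_le hk β
  obtain ⟨C₂, hC₂, hfwd⟩ := exists_OmegaFwd_le hk β
  have hk' : (1 : ℝ) ≤ k := by exact_mod_cast hk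
  refine ⟨C₁ + C₂ + 2 ^ k, by positivity, fun f hf δ hδ0 hδ => ?_⟩
  have hL : 2 * (k : ℝ) ^ 2 * δ ^ 2 ≤ 1 / 2 := by
    rw [le_div_iff₀ (by positivity)] at hδ
    have h0 : 0 ≤ k * δ := by positivity
    nlinarith
  have h1 : OmegaMain k f δ (jacobi β β) 1 ≤
      ENNReal.ofReal (C₁ + C₂ + 2 ^ k) * innerTerm k β f δ :=
    (hmain f hf δ hδ).trans (mul_le_mul_left (ENNReal.ofReal_le_ofReal
      (by have : (0 : ℝ) < 2 ^ k := by positivity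
          linarith)) _)
  have h2 := OmegaBwd_le hk β hf.1 hL
  constructor
  · rw [add_comm (OmegaMain k f δ (jacobi β β) 1)]
    exact add_le_add (h2.trans (mul_le_mul_left (ENNReal.ofReal_le_ofReal (by linarith)) _)) h1
  · intro hcases
    have h3 := hfwd f hf.1 δ hL hcases
    have h4 : OmegaFwd k f δ (jacobi β β) 1 + OmegaBwd k f δ (jacobi β β) 1 ≤
        ENNReal.ofReal (C₁ + C₂ + 2 ^ k) * endTerm k β f δ := by
      refine (add_le_add h3 h2).trans ?_
      rw [← add_mul, ← ENNReal.ofReal_add hC₂.le (by positivity)]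
      exact mul_le_mul_left (ENNReal.ofReal_le_ofReal (by linarith)) _
    rw [omegaDT, add_assoc, add_comm]
    exact add_le_add h4 h1
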